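/- arXiv:1804.08172 — 2 statements merged into one kernel-verified Lean document; each statement's English description precedes it below -/
import Mathlib

section
/- Suppose g : ℝ^d≥0 → ℝ is differentiable, convex, and supermodular with g(0) = 0. Fix x ∈ {0,1}^n and let X be the random vector obtained from x by independently setting each coordinate of x to 0 with probability 1/2 (and keeping it otherwise). Then E[π(X)] ≥ (1/2)·π(x). -/
/-!
The cost `g` is superadditive on the nonnegative orthant: `g a + g b ≤ g (a + b)`. Indeed the
increment `g (z + t eᵢ) - g z` grows with `z`: in the coordinates other than `i` by
supermodularity, in coordinate `i` by convexity (`increment_mono`). Adding the coordinates of `b`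
one at a time, starting from `0` and from `a` respectively, and using `g 0 = 0`, gives
superadditivity (`superadditive`).

Pairing every keep/discard pattern `σ` with its complement splits `x` into two nonnegative parts,
whose profits therefore sum to at least the profit of `x`. Complementation is a bijection of the
patterns, so averaging gives the claim.
-/

/-- The profit of a fractional solution `x`: total value minus the cost of the
total occupied size. -/
noncomputable def profit {d n : ℕ} (v : Fin n → ℝ) (S : Matrix (Fin d) (Fin n) ℝ)
    (g : (Fin d → ℝ) → ℝ) (x : Fin n → ℝ) : ℝ :=
  (∑ i, v i * x i) - g (S.mulVec x)

/-- Convexity along a nonnegative direction `u`: shifting by `s • u` increases the increment of `g`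
along `t • u`. -/
lemma convex_increment {d : ℕ} {g : (Fin d → ℝ) → ℝ}
    (hconv : ConvexOn ℝ {z : Fin d → ℝ | 0 ≤ z} g)
    {z u : Fin d → ℝ} (hz : 0 ≤ z) (hu : 0 ≤ u) {s t : ℝ} (hs : 0 ≤ s) (ht : 0 ≤ t) :
    g (z + t • u) + g (z + s • u) ≤ g z + g (z + (s + t) • u) := by
  rcases (add_nonneg hs ht).eq_or_lt with h | h
  · have hs0 : s = 0 := by linarith
    have ht0 : t = 0 := by linarith
    simp [hs0, ht0]
  have hw : 0 ≤ z + (s + t) • u := add_nonneg hz (smul_nonneg h.le hu)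
  have hsum : s / (s + t) + t / (s + t) = 1 := by field_simp
  have hsum_comm : t / (s + t) + s / (s + t) = 1 := by rw [add_comm, hsum]
  have h1 := hconv.2 hz hw (div_nonneg hs h.le) (div_nonneg ht h.le) hsum
  have h2 := hconv.2 hz hw (div_nonneg ht h.le) (div_nonneg hs h.le) hsum_comm
  -- Both intermediate points lie on the segment from `z` to `z + (s + t) • u`.
  have e1 : (s / (s + t)) • z + (t / (s + t)) • (z + (s + t) • u) = z + t • u := by
    ext k
    simp only [Pi.add_apply, Pi.smul_apply, smul_eq_mul]
    field_simp
    ring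
  have e2 : (t / (s + t)) • z + (s / (s + t)) • (z + (s + t) • u) = z + s • u := by
    ext k
    simp only [Pi.add_apply, Pi.smul_apply, smul_eq_mul]
    field_simp
    ring
  rw [e1] at h1
  rw [e2] at h2
  simp only [smul_eq_mul] at h1 h2
  have key : s / (s + t) * g z + t / (s + t) * g (z + (s + t) • u)
      + (t / (s + t) * g z + s / (s + t) * g (z + (s + t) • u))
      = g z + g (z + (s + t) • u) := by
    linear_combination (g z + g (z + (s + t) • u)) * hsum
  linarith

/-- The increment of `g` along coordinate `i` is monotone in the base point. -/
lemma increment_mono {d : ℕ} {g : (Fin d → ℝ) → ℝ}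
    (hconv : ConvexOn ℝ {z : Fin d → ℝ | 0 ≤ z} g)
    (hsup : ∀ x y : Fin d → ℝ, 0 ≤ x → 0 ≤ y → g x + g y ≤ g (x ⊓ y) + g (x ⊔ y))
    {z a : Fin d → ℝ} (hz : 0 ≤ z) (ha : 0 ≤ a) (i : Fin d) {t : ℝ} (ht : 0 ≤ t) :
    g (z + Pi.single i t) + g (z + a) ≤ g z + g (z + a + Pi.single i t) := by
  -- `b` is `a` with coordinate `i` removed.
  set b : Fin d → ℝ := Function.update a i 0 with hb
  have hb0 : 0 ≤ b := by
    intro k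
    by_cases hk : k = i
    · subst hk; simp [hb]
    · simpa [hb, hk] using ha k
  have hu : (0 : Fin d → ℝ) ≤ Pi.single i 1 := Pi.single_nonneg.2 zero_le_one
  have hsingle : ∀ r : ℝ, (Pi.single i r : Fin d → ℝ) = r • Pi.single i 1 := by
    intro r
    rw [← Pi.single_smul]
    simp
  have hab : a = b + a i • Pi.single i 1 := by
    ext k
    by_cases hk : k = i
    · subst hk; simp [hb]
    · simp [hb, hk]
  have h1 := hsup (z + Pi.single i t) (z + b)
    (add_nonneg hz (Pi.single_nonneg.2 ht)) (add_nonneg hz hb0)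
  -- The increments `t eᵢ` and `b` have disjoint supports, so meet and join are explicit.
  have einf : (z + Pi.single i t) ⊓ (z + b) = z := by
    ext k
    by_cases hk : k = i
    · subst hk; simp [hb, ht]
    · have := ha k
      simp only [Pi.zero_apply] at this
      simp [hb, hk, this]
  have esup : (z + Pi.single i t) ⊔ (z + b) = z + b + Pi.single i t := by
    ext k
    by_cases hk : k = i
    · subst hk; simp [hb, ht]
    · have := ha k
      simp only [Pi.zero_apply] at this
      simp [hb, hk, this]
  rw [einf, esup] at h1
  have h2 := convex_increment hconv (add_nonneg hz hb0) hu (ha i) ht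
  have e1 : z + b + a i • Pi.single i 1 = z + a := by
    rw [add_assoc, ← hab]
  have e2 : z + b + (a i + t) • Pi.single i 1 = z + a + Pi.single i t := by
    rw [add_smul, ← add_assoc, e1, ← hsingle]
  rw [e1, e2, ← hsingle] at h2
  linarith

lemma superadditive {d : ℕ} {g : (Fin d → ℝ) → ℝ}
    (hconv : ConvexOn ℝ {z : Fin d → ℝ | 0 ≤ z} g)
    (hsup : ∀ x y : Fin d → ℝ, 0 ≤ x → 0 ≤ y → g x + g y ≤ g (x ⊓ y) + g (x ⊔ y))
    (hg0 : g 0 = 0) {a b : Fin d → ℝ} (ha : 0 ≤ a) (hb : 0 ≤ b) :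
    g a + g b ≤ g (a + b) := by
  have key : ∀ s : Finset (Fin d),
      g a + g (∑ i ∈ s, Pi.single i (b i)) ≤ g (a + ∑ i ∈ s, Pi.single i (b i)) := by
    intro s
    induction s using Finset.induction_on with
    | empty => simp [hg0]
    | insert i s his ih =>
      have hz : (0 : Fin d → ℝ) ≤ ∑ i ∈ s, Pi.single i (b i) :=
        Finset.sum_nonneg fun j _ => Pi.single_nonneg.2 (hb j)
      have h := increment_mono hconv hsup hz ha i (hb i)
      rw [Finset.sum_insert his, add_comm (Pi.single i (b i) : Fin d → ℝ), ← add_assoc, add_comm a (∑ j ∈ s, _)]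
      rw [add_comm a] at ih
      linarith
  simpa only [Finset.univ_sum_single] using key Finset.univ

/-- If each coordinate of a 0/1 vector `x` is independently zeroed out with probability 1/2
(i.e. we average over all keep/discard patterns `σ : Fin n → Bool` uniformly), the expected
profit is at least half the profit of `x`, provided the cost `g` is supermodular. -/
theorem expected_profit_half {d n : ℕ} (g : (Fin d → ℝ) → ℝ)
    (hdiff : Differentiable ℝ g)
    (hconv : ConvexOn ℝ {z : Fin d → ℝ | 0 ≤ z} g)
    (hsup : ∀ x y : Fin d → ℝ, 0 ≤ x → 0 ≤ y → g x + g y ≤ g (x ⊓ y) + g (x ⊔ y))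
    (hg0 : g 0 = 0)
    (v : Fin n → ℝ) (hv : 0 ≤ v)
    (S : Matrix (Fin d) (Fin n) ℝ) (hS : ∀ i j, 0 ≤ S i j)
    (x : Fin n → ℝ) (hx : ∀ i, x i = 0 ∨ x i = 1) :
    profit v S g x / 2 ≤
      (∑ σ : Fin n → Bool, profit v S g (fun i => if σ i then x i else 0)) / 2 ^ n := by
  have hx0 : ∀ i, 0 ≤ x i := fun i => by rcases hx i with h | h <;> simp [h]
  have hpos : ∀ y : Fin n → ℝ, (∀ i, 0 ≤ y i) → 0 ≤ S.mulVec y := by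
    intro y hy k
    simp only [Matrix.mulVec, dotProduct, Pi.zero_apply]
    exact Finset.sum_nonneg fun j _ => mul_nonneg (hS k j) (hy j)
  have hpair : ∀ σ : Fin n → Bool, profit v S g x ≤
      profit v S g (fun i => if σ i then x i else 0) +
      profit v S g (fun i => if !(σ i) then x i else 0) := by
    intro σ
    have hsplit : x = (fun i => if σ i then x i else 0) + (fun i => if !(σ i) then x i else 0) := by
      ext i
      cases h : σ i <;> simp [h]
    have h := superadditive hconv hsup hg0
      (hpos (fun i => if σ i then x i else 0) fun i => by
        split_ifs <;> simp [hx0 i])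
      (hpos (fun i => if !(σ i) then x i else 0) fun i => by
        split_ifs <;> simp [hx0 i])
    rw [← Matrix.mulVec_add, ← hsplit] at h
    have hlin : ∑ i, v i * x i = ∑ i, v i * (if σ i then x i else 0) +
        ∑ i, v i * (if !(σ i) then x i else 0) := by
      rw [← Finset.sum_add_distrib]
      refine Finset.sum_congr rfl fun i _ => ?_
      cases h : σ i <;> simp
    unfold profit
    linarith
  have hinv : Function.Involutive (fun (σ : Fin n → Bool) i => !(σ i)) := fun σ => by simp
  have hcompl : ∑ σ : Fin n → Bool, profit v S g (fun i => if !(σ i) then x i else 0) =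
      ∑ σ : Fin n → Bool, profit v S g (fun i => if σ i then x i else 0) :=
    Equiv.sum_comp hinv.toPerm
      (fun σ : Fin n → Bool => profit v S g (fun i => if σ i then x i else 0))
  have hsum := Finset.sum_le_sum fun (σ : Fin n → Bool) (_ : σ ∈ Finset.univ) => hpair σ
  rw [Finset.sum_add_distrib, hcompl] at hsum
  simp only [Finset.sum_const, Finset.card_univ, Fintype.card_fun, Fintype.card_bool,
    Fintype.card_fin, nsmul_eq_mul, Nat.cast_pow, Nat.cast_ofNat] at hsum
  rw [le_div_iff₀ (by positivity)]
  linarith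
end

section
/- Let g : ℝ^d≥0 → ℝ be convex and differentiable with g(0) = 0, and let λ* ∈ ℝ^d≥0. Suppose x ∈ {0,1}^n has support contained in U°_{λ*} and satisfies ∇g(Sx) ≤ λ* componentwise. Then for every item e in the support of x, π(x) > π(x − χ_e). Consequently, if every x' ≤ x with support in U°_{λ*} also satisfies ∇g(Sx') ≤ λ*, then π is nonnegative and strictly increasing along subsets of the support of x, and in particular π(x) ≥ 0. -/
/-- The `i`-th coordinate of the gradient of `g` at `x`. -/
noncomputable def grad {d : ℕ} (g : (Fin d → ℝ) → ℝ) (x : Fin d → ℝ) (i : Fin d) : ℝ :=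
  fderiv ℝ g x (Pi.single i 1)

/-- The first-order (tangent hyperplane) inequality for a convex function on a set. -/
lemma convexOn_first_order {E : Type*} [NormedAddCommGroup E] [NormedSpace ℝ E] {s : Set E}
    {g : E → ℝ} (hconv : ConvexOn ℝ s g) {a b : E} (ha : a ∈ s) (hb : b ∈ s)
    (hdiff : DifferentiableAt ℝ g a) : g a + fderiv ℝ g a (b - a) ≤ g b := by
  have hline : ConvexOn ℝ (AffineMap.lineMap (k := ℝ) a b ⁻¹' s)
      (g ∘ AffineMap.lineMap (k := ℝ) a b) := hconv.comp_affineMap _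
  have hder : HasDerivAt (g ∘ AffineMap.lineMap (k := ℝ) a b) (fderiv ℝ g a (b - a)) 0 := by
    have h1 : HasDerivAt (AffineMap.lineMap (k := ℝ) a b) (b - a) (0 : ℝ) :=
      AffineMap.hasDerivAt_lineMap
    have h2 : HasFDerivAt g (fderiv ℝ g a) (AffineMap.lineMap (k := ℝ) a b 0) := by
      simpa using hdiff.hasFDerivAt
    exact h2.comp_hasDerivAt 0 h1
  have h := hline.le_slope_of_hasDerivAt (x := 0) (y := 1) (by simpa using ha)
    (by simpa using hb) one_pos hder
  simp [slope_def_field] at h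
  rw [map_sub]
  linarith

lemma fderiv_apply_eq_sum_grad {d : ℕ} (g : (Fin d → ℝ) → ℝ) (a w : Fin d → ℝ) :
    fderiv ℝ g a w = ∑ j, grad g a j * w j := by
  conv_lhs => rw [pi_eq_sum_univ' w]
  simp [grad, map_sum, mul_comm]

lemma profit_gain_lower_bound {d n : ℕ} {g : (Fin d → ℝ) → ℝ}
    (hconv : ConvexOn ℝ {z : Fin d → ℝ | 0 ≤ z} g) (hdiff : Differentiable ℝ g)
    (v : Fin n → ℝ) {S : Matrix (Fin d) (Fin n) ℝ} (hS : ∀ i j, 0 ≤ S i j)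
    {lam : Fin d → ℝ} {y z : Fin n → ℝ} (hz : 0 ≤ z) (hzy : z ≤ y)
    (hgrad : ∀ j, grad g (S.mulVec y) j ≤ lam j) :
    ∑ i, (v i - ∑ j, lam j * S j i) * (y i - z i) ≤ profit v S g y - profit v S g z := by
  have hmem : ∀ u : Fin n → ℝ, 0 ≤ u → S.mulVec u ∈ {z : Fin d → ℝ | 0 ≤ z} :=
    fun u hu j => by
      simp only [Matrix.mulVec, dotProduct, Pi.zero_apply]
      exact Finset.sum_nonneg fun i _ => mul_nonneg (hS j i) (hu i)
  have hfo := convexOn_first_order hconv (hmem y (hz.trans hzy)) (hmem z hz) (hdiff _)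
  rw [← Matrix.mulVec_sub, fderiv_apply_eq_sum_grad] at hfo
  have hle : ∑ j, lam j * S.mulVec (z - y) j ≤ ∑ j, grad g (S.mulVec y) j * S.mulVec (z - y) j := by
    refine Finset.sum_le_sum fun j _ => mul_le_mul_of_nonpos_right (hgrad j) ?_
    simp only [Matrix.mulVec, dotProduct]
    exact Finset.sum_nonpos fun i _ =>
      mul_nonpos_of_nonneg_of_nonpos (hS j i) (sub_nonpos.2 (hzy i))
  have hswap : ∑ j, lam j * S.mulVec (z - y) j
      = ∑ i, (∑ j, lam j * S j i) * (z i - y i) := by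
    simp only [Matrix.mulVec, dotProduct, Finset.mul_sum, Finset.sum_mul, Pi.sub_apply]
    rw [Finset.sum_comm]
    simp only [mul_assoc]
  have hsum : ∑ i, (v i - ∑ j, lam j * S j i) * (y i - z i)
      = ∑ i, v i * y i - ∑ i, v i * z i + ∑ i, (∑ j, lam j * S j i) * (z i - y i) := by
    rw [← Finset.sum_sub_distrib, ← Finset.sum_add_distrib]
    exact Finset.sum_congr rfl fun i _ => by ring
  unfold profit
  linarith

/-- Monotonicity of profit on `U°_{λ*}`: dropping an item of a solution whose support
lies in `U°_{λ*}` and satisfying `∇g(Sx) ≤ λ*` strictly decreases the profit; hence, if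
the gradient condition holds hereditarily, `π` is nonnegative and strictly increasing
along subsets of the support of `x`. -/
theorem profit_monotone_on_strict_set {d n : ℕ} (g : (Fin d → ℝ) → ℝ)
    (hconv : ConvexOn ℝ {z : Fin d → ℝ | 0 ≤ z} g)
    (hdiff : Differentiable ℝ g)
    (hg0 : g 0 = 0)
    (v : Fin n → ℝ) (hv : 0 ≤ v)
    (S : Matrix (Fin d) (Fin n) ℝ) (hS : ∀ i j, 0 ≤ S i j)
    (lam : Fin d → ℝ) (hlam : 0 ≤ lam)
    (x : Fin n → ℝ) (hxbin : ∀ i, x i = 0 ∨ x i = 1)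
    (hsupp : ∀ i, x i ≠ 0 → (∑ j, lam j * S j i) < v i)
    (hgrad : ∀ j, grad g (S.mulVec x) j ≤ lam j) :
    (∀ e : Fin n, x e ≠ 0 →
        profit v S g (x - Pi.single e 1) < profit v S g x) ∧
    ((∀ y : Fin n → ℝ, (∀ i, y i = 0 ∨ y i = 1) → y ≤ x →
          ∀ j, grad g (S.mulVec y) j ≤ lam j) →
      ((∀ y : Fin n → ℝ, (∀ i, y i = 0 ∨ y i = 1) → y ≤ x →
          0 ≤ profit v S g y ∧
          ∀ e : Fin n, y e ≠ 0 →
            profit v S g (y - Pi.single e 1) < profit v S g y) ∧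
        0 ≤ profit v S g x)) := by
  have hstep : ∀ y : Fin n → ℝ, (∀ i, y i = 0 ∨ y i = 1) → y ≤ x →
      (∀ j, grad g (S.mulVec y) j ≤ lam j) →
      0 ≤ profit v S g y ∧ ∀ e : Fin n, y e ≠ 0 →
        profit v S g (y - Pi.single e 1) < profit v S g y := by
    intro y hy hyx hgy
    have hy0 : 0 ≤ y := fun i => by rcases hy i with h | h <;> simp [h]
    have hpos : ∀ i, y i ≠ 0 → 0 < v i - ∑ j, lam j * S j i := fun i hi =>
      sub_pos.2 <| hsupp i (((hy0 i).lt_of_ne' hi).trans_le (hyx i)).ne'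
    refine ⟨?_, fun e he => ?_⟩
    · have h := profit_gain_lower_bound hconv hdiff v hS le_rfl hy0 hgy
      have hzero : profit v S g 0 = 0 := by simp [profit, hg0]
      have hnn : 0 ≤ ∑ i, (v i - ∑ j, lam j * S j i) * (y i - (0 : Fin n → ℝ) i) := by
        refine Finset.sum_nonneg fun i _ => ?_
        rcases eq_or_ne (y i) 0 with hi | hi
        · simp [hi]
        · exact mul_nonneg (hpos i hi).le (by simpa using hy0 i)
      linarith
    · have hz : 0 ≤ y - Pi.single e 1 := by
        intro i
        rcases eq_or_ne i e with rfl | hi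
        · simp [(hy i).resolve_left he]
        · simpa [hi] using hy0 i
      have hzy : y - Pi.single e 1 ≤ y := by
        intro i
        rcases eq_or_ne i e with rfl | hi
        · simp
        · simp [hi]
      have h := profit_gain_lower_bound hconv hdiff v hS hz hzy hgy
      have hsum : ∑ i, (v i - ∑ j, lam j * S j i) * (y i - (y - Pi.single e 1 : Fin n → ℝ) i)
          = v e - ∑ j, lam j * S j e := by
        simp [Pi.single_apply]
      linarith [hpos e he]
  exact ⟨(hstep x hxbin le_rfl hgrad).2, fun hher =>
    ⟨fun y hy hyx => hstep y hy hyx (hher y hy hyx), (hstep x hxbin le_rfl hgrad).1⟩⟩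
end
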